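/- Suppose m = N − 1 (the feature space has codimension 1). Let X be an N×m real matrix such that XᵀΦ and XᵀLΦ are invertible. For a reward r ∈ ℝ^N write v*(r) := L⁻¹ r and v̂_X(r) := Φ(XᵀLΦ)⁻¹Xᵀ r. Then the error ratio is independent of the reward: for any two rewards r₁, r₂ whose values v*(r₁), v*(r₂) do not lie in the column space of Φ, ‖v*(r₁) − v̂_X(r₁)‖_ξ / ‖v*(r₁) − Π v*(r₁)‖_ξ = ‖v*(r₂) − v̂_X(r₂)‖_ξ / ‖v*(r₂) − Π v*(r₂)‖_ξ. -/

import Mathlib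

open Matrix

/-- The ξ-weighted quadratic norm on ℝ^N: ‖x‖_ξ = √(Σ_i ξ_i x_i²). -/
noncomputable def wnorm {N : ℕ} (ξ : Fin N → ℝ) (x : Fin N → ℝ) : ℝ :=
  Real.sqrt (∑ i, ξ i * (x i) ^ 2)

theorem wnorm_smul' {N : ℕ} (ξ : Fin N → ℝ) (c : ℝ) (x : Fin N → ℝ) :
    wnorm ξ (c • x) = |c| * wnorm ξ x := by
  unfold wnorm
  rw [← Real.sqrt_sq_eq_abs, ← Real.sqrt_mul (sq_nonneg c), Finset.mul_sum]
  congr 1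
  refine Finset.sum_congr rfl fun i _ => ?_
  simp only [Pi.smul_apply, smul_eq_mul]
  ring

theorem resid_smul {N m : ℕ} (Q : Matrix (Fin N) (Fin N) ℝ) (Φ : Matrix (Fin N) (Fin m) ℝ)
    (hQ : Q * Φ = Φ) (c : ℝ) (v₁ v₂ : Fin N → ℝ) (w : Fin m → ℝ)
    (h : v₂ = Φ *ᵥ w + c • v₁) : v₂ - Q *ᵥ v₂ = c • (v₁ - Q *ᵥ v₁) := by
  rw [h, mulVec_add, mulVec_mulVec, hQ, mulVec_smul, smul_sub]
  abel

theorem exists_decomp {N m : ℕ} (hm : m + 1 = N) (Φ : Matrix (Fin N) (Fin m) ℝ)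
    (hΦ : Function.Injective Φ.mulVec) (v₁ v₂ : Fin N → ℝ)
    (h₁ : ¬ ∃ w : Fin m → ℝ, v₁ = Φ.mulVec w) :
    ∃ (w : Fin m → ℝ) (c : ℝ), v₂ = Φ *ᵥ w + c • v₁ := by
  let f : ((Fin m → ℝ) × ℝ) →ₗ[ℝ] (Fin N → ℝ) :=
    Φ.mulVecLin.coprod (LinearMap.toSpanSingleton ℝ _ v₁)
  have hf : ∀ w c, f (w, c) = Φ *ᵥ w + c • v₁ := fun w c => by simp [f]
  have hinj : Function.Injective f := by
    rw [← LinearMap.ker_eq_bot, LinearMap.ker_eq_bot']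
    rintro ⟨w, c⟩ h
    rw [hf] at h
    have hc : c = 0 := by
      by_contra hc
      apply h₁
      refine ⟨-(c⁻¹ • w), ?_⟩
      rw [mulVec_neg, mulVec_smul, eq_neg_of_add_eq_zero_left h, smul_neg, neg_neg, smul_smul,
        inv_mul_cancel₀ hc, one_smul]
    subst hc
    have hw : w = 0 := hΦ (by simpa using h)
    simp [hw]
  have hs : Function.Surjective f :=
    (LinearMap.injective_iff_surjective_of_finrank_eq_finrank (by simp [hm])).1 hinj
  obtain ⟨⟨w, c⟩, h⟩ := hs v₂
  exact ⟨w, c, by rw [← hf, h]⟩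

theorem L_unit {N : ℕ} (P : Matrix (Fin N) (Fin N) ℝ)
    (hP0 : ∀ i j, 0 ≤ P i j) (hP1 : ∀ i, ∑ j, P i j = 1)
    (γ : ℝ) (hγ0 : 0 < γ) (hγ1 : γ < 1) : IsUnit (1 - γ • P).det := by
  rw [isUnit_iff_ne_zero]
  apply det_ne_zero_of_sum_row_lt_diag
  intro k
  have h1 : ∑ j ∈ Finset.univ.erase k, ‖(1 - γ • P) k j‖ =
      ∑ j ∈ Finset.univ.erase k, γ * P k j := by
    refine Finset.sum_congr rfl fun j hj => ?_
    have hkj : k ≠ j := (Finset.ne_of_mem_erase hj).symm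
    simp [one_apply_ne hkj, abs_of_pos hγ0, abs_of_nonneg (hP0 k j)]
  have h2 := Finset.add_sum_erase Finset.univ (fun j => P k j) (Finset.mem_univ k)
  rw [hP1] at h2
  rw [h1, ← Finset.mul_sum]
  have h3 : (1 - γ • P) k k = 1 - γ * P k k := by simp
  rw [h3]
  refine lt_of_lt_of_le ?_ (le_abs_self _)
  have : ∑ j ∈ Finset.univ.erase k, P k j = 1 - P k k := by linarith
  rw [this]
  linarith

theorem gram_unit {N m : ℕ} (ξ : Fin N → ℝ) (hξ : ∀ i, 0 < ξ i)
    (Φ : Matrix (Fin N) (Fin m) ℝ) (hΦ : Function.Injective Φ.mulVec) :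
    IsUnit (Φᵀ * Matrix.diagonal ξ * Φ) := by
  have h : (Matrix.diagonal ξ).PosDef := PosDef.diagonal hξ
  have := (h.conjTranspose_mul_mul_same hΦ).isUnit
  simpa using this

theorem stmt_19 (N m : ℕ) (hm : 0 < m) (hmN : m = N - 1)
    (P : Matrix (Fin N) (Fin N) ℝ)
    (hP0 : ∀ i j, 0 ≤ P i j) (hP1 : ∀ i, ∑ j, P i j = 1)
    (γ : ℝ) (hγ0 : 0 < γ) (hγ1 : γ < 1)
    (L : Matrix (Fin N) (Fin N) ℝ) (hL : L = 1 - γ • P)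
    (ξ : Fin N → ℝ) (hξ : ∀ i, 0 < ξ i)
    (Φ : Matrix (Fin N) (Fin m) ℝ) (hΦ : Function.Injective Φ.mulVec)
    (Pr : Matrix (Fin N) (Fin N) ℝ)
    (hPr : Pr = Φ * (Φᵀ * Matrix.diagonal ξ * Φ)⁻¹ * Φᵀ * Matrix.diagonal ξ)
    (X : Matrix (Fin N) (Fin m) ℝ)
    (hX1 : IsUnit (Xᵀ * Φ)) (hX2 : IsUnit (Xᵀ * L * Φ))
    (r₁ r₂ : Fin N → ℝ)
    (v₁ v₂ : Fin N → ℝ) (hv₁ : v₁ = L⁻¹.mulVec r₁) (hv₂ : v₂ = L⁻¹.mulVec r₂)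
    (h₁ : ¬ ∃ w : Fin m → ℝ, v₁ = Φ.mulVec w)
    (h₂ : ¬ ∃ w : Fin m → ℝ, v₂ = Φ.mulVec w)
    (vX₁ vX₂ : Fin N → ℝ)
    (hvX₁ : vX₁ = (Φ * (Xᵀ * L * Φ)⁻¹ * Xᵀ).mulVec r₁)
    (hvX₂ : vX₂ = (Φ * (Xᵀ * L * Φ)⁻¹ * Xᵀ).mulVec r₂) :
    wnorm ξ (v₁ - vX₁) / wnorm ξ (v₁ - Pr.mulVec v₁) =
      wnorm ξ (v₂ - vX₂) / wnorm ξ (v₂ - Pr.mulVec v₂) := by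
  have hLu : IsUnit L.det := hL ▸ L_unit P hP0 hP1 γ hγ0 hγ1
  have hr₁ : r₁ = L *ᵥ v₁ := by
    rw [hv₁, mulVec_mulVec, mul_nonsing_inv _ hLu, one_mulVec]
  have hr₂ : r₂ = L *ᵥ v₂ := by
    rw [hv₂, mulVec_mulVec, mul_nonsing_inv _ hLu, one_mulVec]
  have hPrΦ : Pr * Φ = Φ := by
    have hu := (isUnit_iff_isUnit_det _).1 (gram_unit ξ hξ Φ hΦ)
    have e : Pr * Φ = Φ * ((Φᵀ * Matrix.diagonal ξ * Φ)⁻¹ * (Φᵀ * Matrix.diagonal ξ * Φ)) := by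
      rw [hPr]; simp only [Matrix.mul_assoc]
    rw [e, nonsing_inv_mul _ hu, Matrix.mul_one]
  have hQΦ : (Φ * (Xᵀ * L * Φ)⁻¹ * Xᵀ * L) * Φ = Φ := by
    have hu := (isUnit_iff_isUnit_det _).1 hX2
    have e : (Φ * (Xᵀ * L * Φ)⁻¹ * Xᵀ * L) * Φ = Φ * ((Xᵀ * L * Φ)⁻¹ * (Xᵀ * L * Φ)) := by
      simp only [Matrix.mul_assoc]
    rw [e, nonsing_inv_mul _ hu, Matrix.mul_one]
  obtain ⟨w, c, h⟩ := exists_decomp (by omega) Φ hΦ v₁ v₂ h₁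
  have hc : c ≠ 0 := by
    rintro rfl
    exact h₂ ⟨w, by simpa using h⟩
  rw [hr₁, mulVec_mulVec] at hvX₁
  rw [hr₂, mulVec_mulVec] at hvX₂
  rw [hvX₁, hvX₂, resid_smul _ Φ hQΦ c v₁ v₂ w h, resid_smul _ Φ hPrΦ c v₁ v₂ w h,
    wnorm_smul', wnorm_smul', mul_div_mul_left _ _ (abs_ne_zero.2 hc)]
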